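/- arXiv:1203.6766 — 2 statements merged into one kernel-verified Lean document; each statement's English description precedes it below -/
import Mathlib

section
/- Let N ∈ ℤ_{≥0} and let (a_i)_{i∈I_{≤N}} be a family of elements of E. Then there exist a constant C ∈ ℝ_{≥0} and n₀ ∈ ℤ_{≥0} such that for every h ≥ n₀ one has sup_{i∈I_{≤N}} |a_i|·q^{−h|i|} ≤ C · sup_{z∈ϖ_F^h𝒪_F} |Σ_{i∈I_{≤N}} a_i·z^i/i!|. -/
/-!
Setting (cf. the paper's notations): `O` plays the role of the ring of integers `𝒪_F` of a
finite extension `F` of `ℚ_p`, `E` is the coefficient field (a finite extension of `ℚ_p`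
with its p-adic absolute value, normalized by `|x| = p^{-val_F(x)}`, `val_F(p) = [F:ℚ_p]`),
`S` is the (finite) set of `ℚ_p`-algebra embeddings `F ↪ E`, restricted here to `O`,
`ν : O → ℝ` is the absolute value on `O` (the common restriction of the norm of `E` along any
embedding), `ϖ` is a fixed uniformizer with `ν ϖ = q⁻¹` where `q = p^f` is the cardinality
of the residue field, and `u * ϖ ^ e = p` records the ramification index `e`.
-/

open scoped Classical

noncomputable section

namespace CrPaper

structure Setting (S O E : Type*) [Fintype S] [CommRing O] [NormedField E] where
  q : ℝ
  p : ℕ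
  fdeg : ℕ
  hp : p.Prime
  hfdeg : 0 < fdeg
  hq : q = (p : ℝ) ^ fdeg
  emb : S → O →+* E
  emb_inj : ∀ s, Function.Injective (emb s)
  emb_distinct : Function.Injective emb
  ν : O → ℝ
  norm_emb : ∀ (s) (z : O), ‖emb s z‖ = ν z
  norm_le_one : ∀ (s) (z : O), ‖emb s z‖ ≤ 1
  norm_add_max : ∀ x y : E, ‖x + y‖ ≤ max ‖x‖ ‖y‖
  ϖ : O
  ν_ϖ : ν ϖ = q⁻¹
  mem_ball_iff : ∀ (y : O) (n : ℕ), (∃ z, y = ϖ ^ n * z) ↔ ν y ≤ q⁻¹ ^ n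
  ram : ∃ (e : ℕ) (u : O), 0 < e ∧ IsUnit u ∧ u * ϖ ^ e = (p : O)

variable {S O E : Type*} [Fintype S] [DecidableEq S] [CommRing O] [IsDomain O]
  [NormedField E] [CompleteSpace E] [CharZero E]

/-- The total weight `|i| = ∑ i_σ` of a multi-index. -/
def wt (i : S → ℕ) : ℕ := ∑ s, i s

/-- `i! = ∏ i_σ!` for a multi-index. -/
def mfact (i : S → ℕ) : ℕ := ∏ s, (i s).factorial

/-- The (finite) set `I_{≤N}` of multi-indices of total weight `≤ N`. -/
def Idx (S : Type*) [Fintype S] [DecidableEq S] (N : ℕ) : Finset (S → ℕ) :=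
  (Fintype.piFinset fun _ : S => Finset.range (N + 1)).filter fun i => wt i ≤ N

/-- `z^i = ∏_σ σ(z)^{i_σ}`. -/
def mpow (St : Setting S O E) (z : O) (i : S → ℕ) : E := ∏ s, St.emb s z ^ i s

/-- The Taylor remainder `ε_{f,N}(x,y) = f(x+y) − ∑_{|i|≤N} D_i f(x) y^i / i!`. -/
def epsTay (St : Setting S O E) (N : ℕ) (f : O → E) (D : (S → ℕ) → O → E) (x y : O) : E :=
  f (x + y) - ∑ i ∈ Idx S N, D i x * mpow St y i / (mfact i : E)

/-- `f` is of class `C^r` with the family of bounded functions `D` witnessing the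
definition: all `D_i` (`|i| ≤ ⌊r⌋`) are bounded and
`C_{f,r}(h) = sup_{x ∈ O, y ∈ ϖ^h O} |ε_{f,⌊r⌋}(x,y)| q^{rh} → 0` as `h → ∞`. -/
def IsCrWith (St : Setting S O E) (r : ℝ) (f : O → E) (D : (S → ℕ) → O → E) : Prop :=
  (∀ i ∈ Idx S ⌊r⌋₊, ∃ C : ℝ, ∀ x : O, ‖D i x‖ ≤ C) ∧
  ∀ ε : ℝ, 0 < ε → ∃ M : ℕ, ∀ h : ℕ, M ≤ h → ∀ x z : O,
    ‖epsTay St ⌊r⌋₊ f D x (St.ϖ ^ h * z)‖ * St.q ^ (r * (h : ℝ)) ≤ ε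

/-- `f` is of class `C^r`. -/
def IsCr (St : Setting S O E) (r : ℝ) (f : O → E) : Prop :=
  ∃ D, IsCrWith St r f D

/-- The `C^r`-norm of `f` (relative to the — unique — family `D`):
`max( sup_{i,x} |D_i f(x)/i!| , sup_{x,y} |ε_{f,⌊r⌋}(x,y)|/|y|^r )`. -/
def CrNorm (St : Setting S O E) (r : ℝ) (f : O → E) (D : (S → ℕ) → O → E) : ℝ :=
  max (⨆ i : (Idx S ⌊r⌋₊), ⨆ x : O, ‖D i.1 x / (mfact i.1 : E)‖)
      (⨆ x : O, ⨆ y : O, ‖epsTay St ⌊r⌋₊ f D x y‖ / St.ν y ^ r)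

open scoped Pointwise in
/-- A point of `O` separating all the embeddings. -/
theorem exists_sep (St : Setting S O E) :
    ∃ x : O, ∀ s t : S, s ≠ t → St.emb s x ≠ St.emb t x := by
  by_contra! hcon
  let H : S × S → AddSubgroup O := fun st =>
    ((St.emb st.1).toAddMonoidHom - (St.emb st.2).toAddMonoidHom).ker
  have hcov : ⋃ st ∈ (Finset.univ.filter fun st : S × S => st.1 ≠ st.2),
      (0 : O) +ᵥ (H st : Set O) = Set.univ := by
    rw [Set.eq_univ_iff_forall]
    intro x
    obtain ⟨s, t, hst, hx⟩ := hcon x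
    simp only [zero_vadd, Set.mem_iUnion]
    refine ⟨(s, t), by simpa using hst, ?_⟩
    simp [H, AddMonoidHom.mem_ker, hx]
  obtain ⟨⟨s, t⟩, hst, hfin⟩ := AddSubgroup.exists_finiteIndex_of_leftCoset_cover hcov
  simp only [Finset.mem_filter, Finset.mem_univ, true_and] at hst
  apply hst
  apply St.emb_distinct
  ext x
  have h1 := AddSubgroup.nsmul_index_mem (H (s, t)) x
  have h2 : (H (s, t)).index ≠ 0 := hfin.index_ne_zero
  simp only [H, AddMonoidHom.mem_ker] at h1 h2
  rw [map_nsmul, nsmul_eq_mul, mul_eq_zero] at h1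
  rcases h1 with h1 | h1
  · exact absurd (by exact_mod_cast h1) h2
  · simpa [sub_eq_zero] using h1

/-- `z ↦ z^i` as a monoid homomorphism. -/
def mpowHom (St : Setting S O E) (i : S → ℕ) : O →* E where
  toFun z := mpow St z i
  map_one' := by simp [mpow]
  map_mul' x y := by simp [mpow, mul_pow, Finset.prod_mul_distrib]

theorem mpowHom_injective (St : Setting S O E) : Function.Injective (mpowHom St) := by
  intro i j hij
  obtain ⟨x, hx⟩ := exists_sep St
  let P : (S → ℕ) → Polynomial E := fun i =>
    ∏ s, (Polynomial.X - Polynomial.C (-(St.emb s x))) ^ i s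
  have hP : P i = P j := by
    apply Polynomial.eq_of_infinite_eval_eq
    apply (Set.infinite_range_of_injective (Nat.cast_injective (R := E))).mono
    rintro _ ⟨n, rfl⟩
    have := DFunLike.congr_fun hij ((n : O) + x)
    simpa [P, Polynomial.eval_prod, mpowHom, mpow] using this
  have hc : ∀ (i : S → ℕ) (t : S), (P i).roots.count (-(St.emb t x)) = i t := by
    intro i t
    have h0 : P i ≠ 0 := by
      apply Finset.prod_ne_zero_iff.mpr
      intro s _
      exact pow_ne_zero _ (Polynomial.X_sub_C_ne_zero _)
    simp only [P] at h0 ⊢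
    rw [Polynomial.roots_prod _ _ h0, Multiset.count_bind]
    change ∑ s, _ = _
    rw [Finset.sum_eq_single t]
    · simp only [Polynomial.roots_pow, Polynomial.roots_X_sub_C, Multiset.count_nsmul,
        Multiset.count_singleton_self, mul_one]
    · intro s _ hs
      simp only [Polynomial.roots_pow, Polynomial.roots_X_sub_C, Multiset.count_nsmul]
      rw [Multiset.count_singleton, if_neg, mul_zero]
      intro h
      exact hx t s (Ne.symm hs) (neg_injective h)
    · simp
  funext t
  rw [← hc i t, hP, hc j t]

theorem coeff_bound (St : Setting S O E) (I : Finset (S → ℕ)) (w : I → E) :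
    ∃ C : ℝ, 0 ≤ C ∧ ∀ (b : I → E) (M : ℝ),
      (∀ z, ‖∑ j, b j * mpow St z j‖ ≤ M) → ‖∑ j, b j * w j‖ ≤ C * M := by
  have hli : LinearIndependent E (fun (j : I) (z : O) => mpow St z j) :=
    (linearIndependent_monoidHom O E).comp (fun j : I => mpowHom St j)
      ((mpowHom_injective St).comp Subtype.val_injective)
  have hw : w ∈ Submodule.span E (Set.range (flip fun (j : I) (z : O) => mpow St z j)) := by
    rw [span_flip_eq_top_iff_linearIndependent.mpr hli]
    trivial
  induction hw using Submodule.span_induction with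
  | mem w hw =>
    obtain ⟨z, rfl⟩ := hw
    exact ⟨1, zero_le_one, fun b M h => by simpa [flip] using h z⟩
  | zero => exact ⟨0, le_rfl, fun b M h => by simp⟩
  | add v w _ _ hv hw =>
    obtain ⟨C, hC, h1⟩ := hv
    obtain ⟨D, hD, h2⟩ := hw
    refine ⟨C + D, by positivity, fun b M h => ?_⟩
    simp only [Pi.add_apply, mul_add, Finset.sum_add_distrib, add_mul]
    exact (norm_add_le _ _).trans (add_le_add (h1 b M h) (h2 b M h))
  | smul c v _ hv =>
    obtain ⟨C, hC, h1⟩ := hv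
    refine ⟨‖c‖ * C, by positivity, fun b M h => ?_⟩
    have : ∑ j, b j * (c • v) j = c * ∑ j, b j * v j := by
      rw [Finset.mul_sum]
      exact Finset.sum_congr rfl fun j _ => by simp; ring
    rw [this, norm_mul, mul_assoc]
    exact mul_le_mul_of_nonneg_left (h1 b M h) (norm_nonneg _)

theorem norm_mpow_le_one (St : Setting S O E) (z : O) (i : S → ℕ) : ‖mpow St z i‖ ≤ 1 := by
  rw [mpow, norm_prod]
  apply Finset.prod_le_one
  · intros; positivity
  · intro s _
    rw [norm_pow]
    exact pow_le_one₀ (norm_nonneg _) (St.norm_le_one s z)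

theorem norm_mpow_unif (St : Setting S O E) (h : ℕ) (i : S → ℕ) :
    ‖mpow St (St.ϖ ^ h) i‖ = St.q ^ (-((h : ℝ) * (wt i : ℝ))) := by
  have hq : 0 ≤ St.q := by rw [St.hq]; positivity
  rw [mpow, norm_prod, Real.rpow_neg hq, ← Nat.cast_mul, Real.rpow_natCast, wt, pow_mul,
    ← Finset.prod_pow_eq_pow_sum, ← Finset.prod_inv_distrib]
  refine Finset.prod_congr rfl fun s _ => ?_
  rw [map_pow, norm_pow, norm_pow, St.norm_emb, St.ν_ϖ, inv_pow, inv_pow]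

/-- for a family `(a_i)_{i ∈ I_{≤N}}` of elements of `E`, there are `C ≥ 0` and
`n₀` such that for all `h ≥ n₀`,
`sup_{i ∈ I_{≤N}} |a_i| q^{−h|i|} ≤ C · sup_{z ∈ ϖ^h O} |∑_i a_i z^i/i!|`. -/
theorem statement2 (St : Setting S O E) (N : ℕ) (a : (S → ℕ) → E) :
    ∃ (C : ℝ) (n₀ : ℕ), 0 ≤ C ∧
      ∀ h : ℕ, n₀ ≤ h → ∀ i ∈ Idx S N,
        ‖a i‖ * St.q ^ (-((h : ℝ) * (wt i : ℝ))) ≤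
          C * ⨆ z : O, ‖∑ j ∈ Idx S N, a j * mpow St (St.ϖ ^ h * z) j / (mfact j : E)‖ := by
  have key : ∀ i : ↥(Idx S N), ∃ C : ℝ, 0 ≤ C ∧
      ∀ (b : ↥(Idx S N) → E) (M : ℝ),
      (∀ z, ‖∑ j, b j * mpow St z j‖ ≤ M) → ‖b i‖ ≤ C * M := by
    intro i
    obtain ⟨C, hC, h⟩ := coeff_bound St (Idx S N) (Pi.single i 1)
    refine ⟨C, hC, fun b M hb => ?_⟩
    have := h b M hb
    rwa [Finset.sum_eq_single i (by intro j _ hj; simp [hj]) (by simp), Pi.single_eq_same,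
      mul_one] at this
  choose C hC hkey using key
  refine ⟨∑ i, C i * ‖(mfact i.1 : E)‖, 0,
    Finset.sum_nonneg fun i _ => mul_nonneg (hC i) (norm_nonneg _), ?_⟩
  intro h _ i hi
  set f : O → ℝ := fun z =>
    ‖∑ j ∈ Idx S N, a j * mpow St (St.ϖ ^ h * z) j / (mfact j : E)‖ with hf
  let b : ↥(Idx S N) → E := fun j =>
    a j * mpow St (St.ϖ ^ h) j / (mfact j.1 : E)
  have hfb : ∀ z, f z = ‖∑ j, b j * mpow St z j‖ := by
    intro z
    rw [hf]
    simp only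
    rw [← Finset.sum_coe_sort]
    congr 1
    refine Finset.sum_congr rfl fun j _ => ?_
    have : mpow St (St.ϖ ^ h * z) j.1 = mpow St (St.ϖ ^ h) j.1 * mpow St z j.1 :=
      map_mul (mpowHom St j.1) _ _
    rw [this]
    simp only [b]
    ring
  have hbdd : BddAbove (Set.range f) := by
    refine ⟨∑ j, ‖b j‖, ?_⟩
    rintro _ ⟨z, rfl⟩
    rw [hfb]
    refine (norm_sum_le _ _).trans (Finset.sum_le_sum fun j _ => ?_)
    rw [norm_mul]
    exact mul_le_of_le_one_right (norm_nonneg _) (norm_mpow_le_one St z j)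
  have h1 := hkey ⟨i, hi⟩ b (⨆ z, f z) (fun z => by rw [← hfb]; exact le_ciSup hbdd z)
  have hm : (mfact i : E) ≠ 0 := by
    rw [Nat.cast_ne_zero, mfact, Finset.prod_ne_zero_iff]
    exact fun s _ => Nat.factorial_ne_zero _
  have hsup : 0 ≤ ⨆ z, f z := Real.iSup_nonneg fun z => norm_nonneg _
  have h2 : ‖a i‖ * St.q ^ (-((h : ℝ) * (wt i : ℝ))) = ‖b ⟨i, hi⟩‖ * ‖(mfact i : E)‖ := by
    rw [← norm_mpow_unif, ← norm_mul, ← norm_mul]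
    simp only [b]
    rw [div_mul_cancel₀ _ hm]
  rw [h2]
  calc ‖b ⟨i, hi⟩‖ * ‖(mfact i : E)‖ ≤ (C ⟨i, hi⟩ * ⨆ z, f z) * ‖(mfact i : E)‖ :=
        mul_le_mul_of_nonneg_right h1 (norm_nonneg _)
    _ = (C ⟨i, hi⟩ * ‖(mfact i : E)‖) * ⨆ z, f z := by ring
    _ ≤ _ := by
        apply mul_le_mul_of_nonneg_right _ hsup
        exact Finset.single_le_sum (f := fun i => C i * ‖(mfact i.1 : E)‖)
          (fun i _ => mul_nonneg (hC i) (norm_nonneg _)) (Finset.mem_univ (⟨i, hi⟩ : Idx S N))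


end CrPaper
end
end

section
/- Let f ∈ C^r(𝒪_F,E) and let i, j ∈ I_{≤[r]} be multi-indices with |i| + |j| ≤ [r]. Then D_j(D_i f) = D_{i+j} f (where D_j(D_i f) is the unique family attached to the function D_i f, which is of class C^{r−|i|}). -/
/-!
Setting (cf. the paper's notations): `O` plays the role of the ring of integers `𝒪_F` of a
finite extension `F` of `ℚ_p`, `E` is the coefficient field (a finite extension of `ℚ_p`
with its p-adic absolute value, normalized by `|x| = p^{-val_F(x)}`, `val_F(p) = [F:ℚ_p]`),
`S` is the (finite) set of `ℚ_p`-algebra embeddings `F ↪ E`, restricted here to `O`,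
`ν : O → ℝ` is the absolute value on `O` (the common restriction of the norm of `E` along any
embedding), `ϖ` is a fixed uniformizer with `ν ϖ = q⁻¹` where `q = p^f` is the cardinality
of the residue field, and `u * ϖ ^ e = p` records the ramification index `e`.
-/

open scoped Classical

noncomputable section

namespace CrPaper

variable {S O E : Type*} [Fintype S] [DecidableEq S] [CommRing O] [IsDomain O]
  [NormedField E] [CompleteSpace E] [CharZero E]

theorem chain_rule_aux (g : S → Polynomial E) (P : MvPolynomial S E) :
    Polynomial.derivative (MvPolynomial.aeval g P) =
      ∑ s, MvPolynomial.aeval g (MvPolynomial.pderiv s P) * Polynomial.derivative (g s) := by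
  induction P using MvPolynomial.induction_on with
  | C a => simp [MvPolynomial.algebraMap_eq]
  | add P Q hP hQ => simp [hP, hQ, add_mul, Finset.sum_add_distrib]
  | mul_X P s hP =>
    simp only [map_mul, MvPolynomial.aeval_X, Polynomial.derivative_mul, hP, Derivation.leibniz,
      MvPolynomial.pderiv_X, map_add, smul_eq_mul, add_mul, Finset.sum_add_distrib]
    rw [add_comm]
    congr 1
    · rw [Finset.sum_eq_single s]
      · simp
      · intro b _ hb
        simp [Pi.single_apply, hb.symm]
      · simp
    · rw [Finset.sum_mul]
      exact Finset.sum_congr rfl fun t _ => by ring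

theorem pderiv_vanish (St : Setting S O E) (P : MvPolynomial S E)
    (hP : ∀ z : O, MvPolynomial.eval (fun s => St.emb s z) P = 0) (s : S) (z : O) :
    MvPolynomial.eval (fun s => St.emb s z) (MvPolynomial.pderiv s P) = 0 := by
  have hev : ∀ (g : S → Polynomial E) (t : E) (Q : MvPolynomial S E),
      Polynomial.eval t (MvPolynomial.aeval g Q) =
        MvPolynomial.eval (fun s => Polynomial.eval t (g s)) Q := by
    intro g t Q
    induction Q using MvPolynomial.induction_on with
    | C a => simp [MvPolynomial.algebraMap_eq]
    | add P Q hP hQ => simp [hP, hQ]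
    | mul_X P s hP => simp [hP]
  have key : ∀ w : O, ∑ s, MvPolynomial.eval (fun s => St.emb s z) (MvPolynomial.pderiv s P) *
      St.emb s w = 0 := by
    intro w
    let g : S → Polynomial E := fun s =>
      Polynomial.C (St.emb s z) + Polynomial.X * Polynomial.C (St.emb s w)
    have h0 : MvPolynomial.aeval g P = 0 := by
      apply Polynomial.eq_zero_of_infinite_isRoot
      refine Set.Infinite.mono (s := Set.range (fun n : ℕ => (n : E))) ?_
        (Set.infinite_range_of_injective Nat.cast_injective)
      rintro _ ⟨n, rfl⟩
      change Polynomial.eval _ _ = 0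
      rw [hev, ← hP (z + n * w)]
      congr 1
      congr 1
      funext s
      simp only [g, Polynomial.eval_add, Polynomial.eval_mul, Polynomial.eval_C, Polynomial.eval_X,
        map_add, map_mul, map_natCast]
    have h1 := chain_rule_aux g P
    rw [h0] at h1
    have h2 := congrArg (Polynomial.eval 0) h1
    simp only [Polynomial.derivative_zero, Polynomial.eval_zero, Polynomial.eval_finsetSum,
      Polynomial.eval_mul, hev] at h2
    rw [h2]
    refine Finset.sum_congr rfl fun s _ => ?_
    simp [g]
  have hli := (linearIndependent_monoidHom O E).comp (fun s : S => (St.emb s : O →* E)) (by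
    intro a b hab
    apply St.emb_distinct
    ext x
    exact DFunLike.congr_fun hab x)
  rw [Fintype.linearIndependent_iff] at hli
  refine hli (fun s => MvPolynomial.eval (fun s => St.emb s z) (MvPolynomial.pderiv s P)) ?_ s
  funext w
  have := key w
  simpa using this

theorem poly_vanish (St : Setting S O E) (n : ℕ) : ∀ (P : MvPolynomial S E)
    (_ : ∀ z : O, MvPolynomial.eval (fun s => St.emb s z) P = 0) (m : S →₀ ℕ)
    (_ : ∑ s, m s = n), MvPolynomial.coeff m P = 0 := by
  induction n with
  | zero =>
    intro P hP m hm
    have hm0 : m = 0 := by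
      ext s
      have := (Finset.sum_eq_zero_iff.mp hm) s (Finset.mem_univ s)
      simpa using this
    have h := hP 0
    simp only [map_zero] at h
    rw [hm0]
    have h' : MvPolynomial.constantCoeff P = 0 := by
      rw [MvPolynomial.constantCoeff_eq]
      rw [← h]
      have := MvPolynomial.eval_zero (R := E) (σ := S)
      have h3 := congrArg (fun φ => φ P) this
      rw [← MvPolynomial.constantCoeff_eq]
      exact h3.symm
    simpa [MvPolynomial.constantCoeff_eq] using h'
  | succ n ih =>
    intro P hP m hm
    have : ∃ s, m s ≠ 0 := by
      by_contra! hcon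
      simp [hcon] at hm
    obtain ⟨s, hs⟩ := this
    have hle : Finsupp.single s 1 ≤ m := by
      rw [Finsupp.single_le_iff]; omega
    obtain ⟨m', rfl⟩ := exists_add_of_le hle
    rw [add_comm] at hm ⊢
    have hm' : ∑ t, m' t = n := by
      simp [Finset.sum_add_distrib, Finsupp.single_apply] at hm
      exact hm
    have h := ih (MvPolynomial.pderiv s P) (pderiv_vanish St P hP s) m' hm'
    rw [MvPolynomial.coeff_pderiv] at h
    rcases mul_eq_zero.mp h with h | h
    · exact h
    · exact absurd h (Nat.cast_add_one_ne_zero _)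

theorem mem_Idx {N : ℕ} {i : S → ℕ} : i ∈ Idx S N ↔ wt i ≤ N := by
  unfold Idx
  simp only [Finset.mem_filter, Fintype.mem_piFinset, Finset.mem_range, and_iff_right_iff_imp]
  intro h s
  have : i s ≤ wt i := Finset.single_le_sum (f := i) (fun _ _ => Nat.zero_le _) (Finset.mem_univ s)
  omega

theorem mono_indep (St : Setting S O E) (T : Finset (S → ℕ)) (a : (S → ℕ) → E)
    (ha : ∀ z : O, ∑ i ∈ T, a i * mpow St z i = 0) : ∀ i ∈ T, a i = 0 := by
  intro i hi
  let P : MvPolynomial S E := ∑ i ∈ T, MvPolynomial.monomial (Finsupp.equivFunOnFinite.symm i) (a i)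
  have hP : ∀ z : O, MvPolynomial.eval (fun s => St.emb s z) P = 0 := by
    intro z
    rw [← ha z]
    simp only [P, map_sum, MvPolynomial.eval_monomial]
    refine Finset.sum_congr rfl fun k _ => ?_
    congr 1
    rw [Finsupp.prod_fintype _ _ (by simp)]
    rfl
  have h := poly_vanish St _ P hP (Finsupp.equivFunOnFinite.symm i) rfl
  simpa [P, MvPolynomial.coeff_sum, MvPolynomial.coeff_monomial, hi] using h

theorem exists_dual (St : Setting S O E) (T : Finset (S → ℕ)) (i : S → ℕ) (hi : i ∈ T) :
    ∃ c : O →₀ E, ∀ k ∈ T, (∑ z ∈ c.support, c z * mpow St z k) = if k = i then 1 else 0 := by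
  let v : O → (T → E) := fun z k => mpow St z k.1
  have htop : Submodule.span E (Set.range v) = ⊤ := by
    by_contra hne
    obtain ⟨φ, hφ, hle⟩ := Submodule.exists_le_ker_of_lt_top _ (lt_top_iff_ne_top.mpr hne)
    apply hφ
    have hz : ∀ z, φ (v z) = 0 := fun z => hle (Submodule.subset_span ⟨z, rfl⟩)
    let a : (S → ℕ) → E := fun k => if h : k ∈ T then φ (Pi.single ⟨k, h⟩ 1) else 0
    have hφv : ∀ u : T → E, φ u = ∑ k : T, a k.1 * u k := by
      intro u
      rw [LinearMap.pi_apply_eq_sum_univ φ u]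
      refine Finset.sum_congr rfl fun k _ => ?_
      have : (fun j => if k = j then (1 : E) else 0) = Pi.single k 1 := by
        funext j
        simp [Pi.single_apply, eq_comm]
      rw [this]
      simp [a, mul_comm]
    have h0 := mono_indep St T a (fun z => by
      rw [← hz z, hφv]
      rw [← Finset.sum_coe_sort T])
    apply LinearMap.ext
    intro u
    rw [hφv]
    simp only [LinearMap.zero_apply]
    exact Finset.sum_eq_zero fun k _ => by rw [h0 k.1 k.2, zero_mul]
  have hmem : (Pi.single (⟨i, hi⟩ : T) (1 : E) : T → E) ∈ Submodule.span E (Set.range v) := by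
    rw [htop]; trivial
  obtain ⟨c, hc⟩ := Finsupp.mem_span_range_iff_exists_finsupp.mp hmem
  refine ⟨c, fun k hk => ?_⟩
  have := congrFun hc ⟨k, hk⟩
  simp only [Finsupp.sum, Finset.sum_apply, Pi.smul_apply, smul_eq_mul, v, Pi.single_apply,
    Subtype.mk.injEq] at this
  exact this

theorem mpow_mul (St : Setting S O E) (y z : O) (k : S → ℕ) :
    mpow St (y * z) k = mpow St y k * mpow St z k := by
  simp [mpow, mul_pow, Finset.prod_mul_distrib]

theorem norm_mpow_pi (St : Setting S O E) (h : ℕ) (k : S → ℕ) :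
    ‖mpow St (St.ϖ ^ h) k‖ = (St.q⁻¹) ^ (h * wt k) := by
  simp only [mpow, map_pow, norm_prod, norm_pow, St.norm_emb, St.ν_ϖ, wt, Finset.mul_sum,
    ← pow_mul]
  rw [Finset.prod_pow_eq_pow_sum]

theorem mfact_ne (k : S → ℕ) : (mfact k : E) ≠ 0 := by
  unfold mfact
  exact_mod_cast Finset.prod_ne_zero_iff.mpr fun s _ => Nat.factorial_ne_zero _

theorem coeff_bound_s5 (St : Setting S O E) (N : ℕ) (k : S → ℕ) (hk : k ∈ Idx S N) :
    ∃ K : ℝ, 0 ≤ K ∧ ∀ (b : (S → ℕ) → E) (h : ℕ) (δ : ℝ),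
      (∀ z : O, ‖∑ l ∈ Idx S N, b l * mpow St (St.ϖ ^ h * z) l / (mfact l : E)‖ ≤ δ) →
      ‖b k‖ * (St.q⁻¹) ^ (h * wt k) ≤ K * δ := by
  obtain ⟨c, hc⟩ := exists_dual St (Idx S N) k hk
  refine ⟨‖(mfact k : E)‖ * ∑ z ∈ c.support, ‖c z‖, by positivity, fun b h δ hb => ?_⟩
  have e : b k * mpow St (St.ϖ ^ h) k = (mfact k : E) * ∑ z ∈ c.support, c z *
      ∑ l ∈ Idx S N, b l * mpow St (St.ϖ ^ h * z) l / (mfact l : E) := by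
    simp only [Finset.mul_sum]
    rw [Finset.sum_comm]
    have : ∀ l ∈ Idx S N, ∑ z ∈ c.support, (mfact k : E) *
        (c z * (b l * mpow St (St.ϖ ^ h * z) l / (mfact l : E))) =
        if l = k then b k * mpow St (St.ϖ ^ h) k else 0 := by
      intro l hl
      have h1 : ∑ z ∈ c.support, (mfact k : E) *
        (c z * (b l * mpow St (St.ϖ ^ h * z) l / (mfact l : E))) =
        (mfact k : E) * b l * mpow St (St.ϖ ^ h) l / (mfact l : E) *
          ∑ z ∈ c.support, c z * mpow St z l := by
        rw [Finset.mul_sum]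
        refine Finset.sum_congr rfl fun z _ => ?_
        rw [mpow_mul]
        ring
      rw [h1, hc l hl]
      split_ifs with hlk
      · subst hlk
        have := mfact_ne (E := E) l
        field_simp
      · simp
    rw [Finset.sum_congr rfl this]
    simp [hk]
  rw [← norm_mpow_pi, ← norm_mul, e, norm_mul, mul_assoc]
  gcongr
  refine (norm_sum_le _ _).trans ?_
  rw [Finset.sum_mul]
  refine Finset.sum_le_sum fun z _ => ?_
  rw [norm_mul]
  gcongr
  exact hb z

theorem mpow_add_div (St : Setting S O E) (y w : O) (k : S → ℕ) :
    mpow St (y + w) k / (mfact k : E) =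
      ∑ i ∈ Fintype.piFinset (fun s => Finset.range (k s + 1)),
        (mpow St w i / (mfact i : E)) * (mpow St y (k - i) / (mfact (k - i) : E)) := by
  have h1 : ∀ s, St.emb s (y + w) ^ k s / ((k s).factorial : E) =
      ∑ a ∈ Finset.range (k s + 1), (St.emb s w ^ a / (a.factorial : E)) *
        (St.emb s y ^ (k s - a) / ((k s - a).factorial : E)) := by
    intro s
    rw [add_comm, map_add, add_pow, Finset.sum_div]
    refine Finset.sum_congr rfl fun a ha => ?_
    have ha' : a ≤ k s := by simpa [Nat.lt_succ_iff] using ha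
    rw [Nat.cast_choose E ha']
    have h1 : ((k s).factorial : E) ≠ 0 := by exact_mod_cast Nat.factorial_ne_zero _
    have h2 : (a.factorial : E) ≠ 0 := by exact_mod_cast Nat.factorial_ne_zero _
    have h3 : ((k s - a).factorial : E) ≠ 0 := by exact_mod_cast Nat.factorial_ne_zero _
    field_simp
  unfold mpow mfact
  push_cast
  rw [← Finset.prod_div_distrib, Finset.prod_congr rfl (fun s _ => h1 s), Finset.prod_univ_sum]
  refine Finset.sum_congr rfl fun i _ => ?_
  rw [← Finset.prod_div_distrib, ← Finset.prod_div_distrib, ← Finset.prod_mul_distrib]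
  rfl

theorem wt_add (i j : S → ℕ) : wt (i + j) = wt i + wt j := by
  simp [wt, Finset.sum_add_distrib]

theorem taylor_regroup (St : Setting S O E) (N : ℕ) (d : (S → ℕ) → E) (y w : O) :
    ∑ k ∈ Idx S N, d k * mpow St (y + w) k / (mfact k : E) =
      ∑ i ∈ Idx S N, (∑ j ∈ Idx S (N - wt i), d (i + j) * mpow St y j / (mfact j : E)) *
        mpow St w i / (mfact i : E) := by
  simp only [mul_div_assoc, mpow_add_div, Finset.mul_sum, Finset.sum_mul, Finset.sum_div]
  rw [Finset.sum_sigma', Finset.sum_sigma']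
  refine Finset.sum_bij' (fun x _ => ⟨x.2, x.1 - x.2⟩) (fun x _ => ⟨x.1 + x.2, x.1⟩) ?_ ?_ ?_ ?_ ?_
  · rintro ⟨k, i⟩ hx
    simp only [Finset.mem_sigma, mem_Idx, Fintype.mem_piFinset, Finset.mem_range] at hx ⊢
    have hle : i ≤ k := fun s => Nat.lt_succ_iff.mp (hx.2 s)
    obtain ⟨j, rfl⟩ := exists_add_of_le hle
    rw [wt_add] at hx
    rw [add_tsub_cancel_left]
    omega
  · rintro ⟨i, j⟩ hx
    simp only [Finset.mem_sigma, mem_Idx, Fintype.mem_piFinset, Finset.mem_range] at hx ⊢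
    rw [wt_add]
    refine ⟨by omega, fun s => ?_⟩
    simp only [Pi.add_apply]
    omega
  · rintro ⟨k, i⟩ hx
    simp only [Finset.mem_sigma, mem_Idx, Fintype.mem_piFinset, Finset.mem_range] at hx ⊢
    have hle : i ≤ k := fun s => Nat.lt_succ_iff.mp (hx.2 s)
    rw [add_tsub_cancel_of_le hle]
  · rintro ⟨i, j⟩ hx
    simp
  · rintro ⟨k, i⟩ hx
    simp only [Finset.mem_sigma, mem_Idx, Fintype.mem_piFinset, Finset.mem_range] at hx ⊢
    have hle : i ≤ k := fun s => Nat.lt_succ_iff.mp (hx.2 s)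
    rw [add_tsub_cancel_of_le hle]
    ring

/-- `D_j (D_i f) = D_{i+j} f` whenever `|i| + |j| ≤ [r]`, where `D'` is the
(unique) family attached to `D_i f ∈ C^{r−|i|}`. -/
theorem statement5 (St : Setting S O E) (r : ℝ) (hr : 0 ≤ r)
    (f : O → E) (D D' : (S → ℕ) → O → E) (i j : S → ℕ)
    (hij : wt i + wt j ≤ ⌊r⌋₊)
    (hD : IsCrWith St r f D)
    (hD' : IsCrWith St (r - (wt i : ℝ)) (D i) D') :
    D' j = D (i + j) := by
  have hqpos : 0 < St.q := by
    rw [St.hq]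
    have := St.hp.pos
    positivity
  have hq1 : 1 ≤ St.q := by
    rw [St.hq]
    exact one_le_pow₀ (by exact_mod_cast St.hp.one_lt.le)
  have hfl : ⌊r - (wt i : ℝ)⌋₊ = ⌊r⌋₊ - wt i := Nat.floor_sub_natCast r (wt i)
  obtain ⟨K, hK, hKb⟩ := coeff_bound_s5 St ⌊r⌋₊ i (mem_Idx.mpr (by omega))
  obtain ⟨L, hL, hLb⟩ := coeff_bound_s5 St (⌊r⌋₊ - wt i) j (mem_Idx.mpr (by omega))
  funext x
  have main : ∀ ε : ℝ, 0 < ε → ‖D' j x - D (i + j) x‖ ≤ L * (K * 2 + 1) * ε := by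
    intro ε hε
    obtain ⟨M₁, hM₁⟩ := hD.2 ε hε
    obtain ⟨M₂, hM₂⟩ := hD'.2 ε hε
    rw [hfl] at hM₂
    let h := max M₁ M₂
    have e1 := hM₁ h (le_max_left _ _)
    have e2 := hM₂ h (le_max_right _ _)
    let Q : ℝ := St.q ^ (r * (h : ℝ))
    have hQ : 0 < Q := Real.rpow_pos_of_pos hqpos _
    have hQ2 : St.q ^ ((r - (wt i : ℝ)) * (h : ℝ)) = Q * (St.q⁻¹) ^ (h * wt i) := by
      rw [sub_mul, Real.rpow_sub hqpos, inv_pow, div_eq_mul_inv]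
      congr 2
      rw [← Real.rpow_natCast]
      congr 1
      push_cast
      ring
    have hqi : 0 < (St.q⁻¹) ^ (h * wt i) := by positivity
    have hqj : 0 < (St.q⁻¹) ^ (h * wt j) := by positivity
    have hbig : 1 ≤ Q * (St.q⁻¹) ^ (h * wt i) * (St.q⁻¹) ^ (h * wt j) := by
      have : (St.q) ^ (h * (wt i + wt j)) ≤ Q := by
        rw [← Real.rpow_natCast]
        apply Real.rpow_le_rpow_of_exponent_le hq1
        have h1 : ((wt i + wt j : ℕ) : ℝ) ≤ r := (Nat.le_floor_iff hr).mp hij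
        push_cast at h1 ⊢
        rw [mul_comm]
        gcongr
      rw [mul_assoc, ← pow_add, ← mul_add, inv_pow, ← div_eq_mul_inv, one_le_div (by positivity)]
      exact this
    have hA : ∀ z : O, ‖D i (x + St.ϖ ^ h * z) - ∑ j ∈ Idx S (⌊r⌋₊ - wt i),
        D (i + j) x * mpow St (St.ϖ ^ h * z) j / (mfact j : E)‖ * (St.q⁻¹) ^ (h * wt i)
        ≤ K * (2 * ε / Q) := by
      intro z
      refine hKb (fun l => D l (x + St.ϖ ^ h * z) - ∑ j ∈ Idx S (⌊r⌋₊ - wt l),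
        D (l + j) x * mpow St (St.ϖ ^ h * z) j / (mfact j : E)) h _ (fun w => ?_)
      have e : ∑ l ∈ Idx S ⌊r⌋₊, (D l (x + St.ϖ ^ h * z) - ∑ j ∈ Idx S (⌊r⌋₊ - wt l),
          D (l + j) x * mpow St (St.ϖ ^ h * z) j / (mfact j : E)) * mpow St (St.ϖ ^ h * w) l
            / (mfact l : E) =
          epsTay St ⌊r⌋₊ f D x (St.ϖ ^ h * (z + w)) -
            epsTay St ⌊r⌋₊ f D (x + St.ϖ ^ h * z) (St.ϖ ^ h * w) := by
        unfold epsTay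
        rw [mul_add, taylor_regroup St ⌊r⌋₊ (fun k => D k x), ← add_assoc]
        simp only [sub_mul, sub_div, Finset.sum_sub_distrib]
        ring
      rw [e]
      have b1 := e1 x (z + w)
      have b2 := e1 (x + St.ϖ ^ h * z) w
      rw [← le_div_iff₀ hQ] at b1 b2
      refine (norm_sub_le _ _).trans ((add_le_add b1 b2).trans (le_of_eq ?_))
      ring
    have hB := hLb (fun l => D' l x - D (i + l) x) h
      ((K * 2 + 1) * ε / (Q * (St.q⁻¹) ^ (h * wt i))) (fun z => by
        have e : ∑ l ∈ Idx S (⌊r⌋₊ - wt i), (D' l x - D (i + l) x) * mpow St (St.ϖ ^ h * z) l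
            / (mfact l : E) =
            (D i (x + St.ϖ ^ h * z) - ∑ j ∈ Idx S (⌊r⌋₊ - wt i),
              D (i + j) x * mpow St (St.ϖ ^ h * z) j / (mfact j : E)) -
            epsTay St (⌊r⌋₊ - wt i) (D i) D' x (St.ϖ ^ h * z) := by
          unfold epsTay
          simp only [sub_mul, sub_div, Finset.sum_sub_distrib]
          ring
        rw [e]
        have b1 := hA z
        have b2 := e2 x z
        rw [hQ2] at b2
        rw [← le_div_iff₀ hqi] at b1
        rw [← le_div_iff₀ (by positivity)] at b2
        refine (norm_sub_le _ _).trans ((add_le_add b1 b2).trans (le_of_eq ?_))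
        field_simp)
    calc ‖D' j x - D (i + j) x‖
        ≤ ‖D' j x - D (i + j) x‖ * (Q * (St.q⁻¹) ^ (h * wt i) * (St.q⁻¹) ^ (h * wt j)) :=
          le_mul_of_one_le_right (norm_nonneg _) hbig
      _ = (‖D' j x - D (i + j) x‖ * (St.q⁻¹) ^ (h * wt j)) * (Q * (St.q⁻¹) ^ (h * wt i)) := by ring
      _ ≤ (L * ((K * 2 + 1) * ε / (Q * (St.q⁻¹) ^ (h * wt i)))) * (Q * (St.q⁻¹) ^ (h * wt i)) := by
          gcongr
      _ = L * (K * 2 + 1) * ε := by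
          field_simp
  rw [← sub_eq_zero, ← norm_le_zero_iff]
  refine le_of_forall_pos_le_add fun η hη => ?_
  have hc : 0 ≤ L * (K * 2 + 1) := by positivity
  refine (main (η / (L * (K * 2 + 1) + 1)) (by positivity)).trans ?_
  rw [zero_add, mul_div_assoc', div_le_iff₀ (by positivity)]
  nlinarith

end CrPaper
end
end
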